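/- arXiv:2107.14803 — 3 statements merged into one kernel-verified Lean document; each statement's English description precedes it below -/
import Mathlib

section
/- Let n ≥ 1, let λ₁, …, λₙ > 0 be threshold values and let Λ = diag(λ₁, …, λₙ). Then for every invertible real n×n matrix P, every vector y ∈ ℝⁿ and every σ > 0, one has P φ_{λ₁σ, …, λₙσ}(P⁻¹ y) = (PΛ) φ_σ((PΛ)⁻¹ y). (Proposition 1: using multiple thresholds is equivalent to using a single threshold with a rescaled transform.) -/
/-- The hard shrinkage function: `x` if `|x| > λ`, else `0`. -/
noncomputable def hardShrink (l x : ℝ) : ℝ := if l < |x| then x else 0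

/-- Proposition 1: using multiple thresholds `λᵢ σ` with transform `P` is equivalent to
using the single threshold `σ` with the rescaled transform `P Λ`, `Λ = diag(λ₁,…,λₙ)`. -/
theorem multiple_thresholds_useless (n : ℕ) (hn : 1 ≤ n) (lam : Fin n → ℝ)
    (hlam : ∀ i, 0 < lam i) (P : Matrix (Fin n) (Fin n) ℝ) (hP : IsUnit P.det)
    (y : Fin n → ℝ) (σ : ℝ) (hσ : 0 < σ) :
    P.mulVec (fun i => hardShrink (lam i * σ) ((P⁻¹).mulVec y i)) =
      (P * Matrix.diagonal lam).mulVec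
        (fun i => hardShrink σ (((P * Matrix.diagonal lam)⁻¹).mulVec y i)) := by
  have hD : IsUnit (Matrix.diagonal lam).det := by
    rw [Matrix.det_diagonal, isUnit_iff_ne_zero]
    exact Finset.prod_ne_zero_iff.mpr fun i _ => (hlam i).ne'
  have key : (P⁻¹).mulVec y =
      (Matrix.diagonal lam).mulVec (((P * Matrix.diagonal lam)⁻¹).mulVec y) := by
    rw [Matrix.mul_inv_rev, Matrix.mulVec_mulVec, ← Matrix.mul_assoc,
      Matrix.mul_nonsing_inv _ hD, Matrix.one_mul]
  rw [key, ← Matrix.mulVec_mulVec]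
  congr 1
  funext i
  rw [Matrix.mulVec_diagonal, Matrix.mulVec_diagonal]
  unfold hardShrink
  simp only [abs_mul, abs_of_pos (hlam i), mul_lt_mul_iff_right₀ (hlam i), mul_ite, mul_zero]
end

section
/- Let n ≥ 1 and let P be a real n×n orthogonal matrix, i.e., PᵀP = D for some invertible diagonal matrix D (necessarily with positive diagonal entries). Set λᵢ = √(D_{ii}) > 0 and Q = P (√D)⁻¹, where √D is the diagonal matrix with entries √(D_{ii}). Then Q is orthonormal, P = Q √D, and for all y ∈ ℝⁿ and all σ > 0, P φ_σ(P⁻¹ y) = Q φ_{λ₁σ, …, λₙσ}(Q⁻¹ y). (An orthogonal transform with a single threshold is equivalent to an orthonormal transform with per-coordinate thresholds.) -/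
open Matrix

/-- An orthogonal transform `P` (i.e. `PᵀP = D` with `D` an invertible diagonal matrix,
necessarily with positive diagonal entries) with a single threshold is equivalent to the
orthonormal transform `Q = P (√D)⁻¹` with per-coordinate thresholds `λᵢ = √(D_{ii})`:
`Q` is orthonormal, `P = Q √D`, the `λᵢ` are positive, and for all `y` and `σ > 0`,
`P φ_σ(P⁻¹ y) = Q φ_{λ₁σ,…,λₙσ}(Q⁻¹ y)`. -/
theorem orthogonal_single_threshold_eq_orthonormal_multi (n : ℕ) (hn : 1 ≤ n)
    (P : Matrix (Fin n) (Fin n) ℝ) (d : Fin n → ℝ)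
    (hD : Pᵀ * P = Matrix.diagonal d) (hDinv : IsUnit (Matrix.diagonal d).det)
    (Q : Matrix (Fin n) (Fin n) ℝ)
    (hQ : Q = P * (Matrix.diagonal fun i => Real.sqrt (d i))⁻¹) :
    (∀ i, 0 < Real.sqrt (d i)) ∧
    (Qᵀ * Q = 1 ∧ Q * Qᵀ = 1) ∧
    P = Q * Matrix.diagonal (fun i => Real.sqrt (d i)) ∧
    ∀ (y : Fin n → ℝ) (σ : ℝ), 0 < σ →
      P.mulVec (fun i => hardShrink σ ((P⁻¹).mulVec y i)) =
        Q.mulVec (fun i => hardShrink (Real.sqrt (d i) * σ) ((Q⁻¹).mulVec y i)) := by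
  have hdne : ∀ i, d i ≠ 0 := by
    rw [Matrix.det_diagonal, isUnit_iff_ne_zero, Finset.prod_ne_zero_iff] at hDinv
    exact fun i => hDinv i (Finset.mem_univ i)
  have hdnn : ∀ i, 0 ≤ d i := by
    intro i
    have h := congrFun (congrFun hD i) i
    rw [Matrix.diagonal_apply_eq, Matrix.mul_apply] at h
    rw [← h]
    exact Finset.sum_nonneg fun j _ => by
      rw [Matrix.transpose_apply]; exact mul_self_nonneg _
  have hpos : ∀ i, 0 < Real.sqrt (d i) := fun i =>
    Real.sqrt_pos.2 (lt_of_le_of_ne (hdnn i) (hdne i).symm)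
  have hSdet : IsUnit (Matrix.diagonal fun i => Real.sqrt (d i)).det := by
    rw [Matrix.det_diagonal, isUnit_iff_ne_zero, Finset.prod_ne_zero_iff]
    exact fun i _ => (hpos i).ne'
  have hSS : (Matrix.diagonal fun i => Real.sqrt (d i)) *
      (Matrix.diagonal fun i => Real.sqrt (d i)) = Matrix.diagonal d := by
    rw [Matrix.diagonal_mul_diagonal]
    congr 1
    funext i
    exact Real.mul_self_sqrt (hdnn i)
  have hST : (Matrix.diagonal fun i => Real.sqrt (d i))ᵀ =
      Matrix.diagonal fun i => Real.sqrt (d i) := Matrix.diagonal_transpose _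
  have hdiag : ∀ v : Fin n → ℝ, (Matrix.diagonal fun i => Real.sqrt (d i)).mulVec v =
      fun i => Real.sqrt (d i) * v i := fun v => by
    funext i
    exact Matrix.mulVec_diagonal _ _ _
  generalize (Matrix.diagonal fun i => Real.sqrt (d i)) = S at *
  have hPQ : P = Q * S := by
    rw [hQ, Matrix.mul_assoc, Matrix.nonsing_inv_mul _ hSdet, Matrix.mul_one]
  have h1 : Qᵀ * Q = 1 := by
    rw [hQ, Matrix.transpose_mul, Matrix.transpose_nonsing_inv, hST, Matrix.mul_assoc,
      ← Matrix.mul_assoc Pᵀ, hD, ← hSS, Matrix.mul_assoc S, Matrix.mul_nonsing_inv _ hSdet,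
      Matrix.mul_one, Matrix.nonsing_inv_mul _ hSdet]
  refine ⟨hpos, ⟨h1, mul_eq_one_comm.1 h1⟩, hPQ, ?_⟩
  intro y σ hσ
  have hQi : Q⁻¹ = S * P⁻¹ := by
    rw [hPQ, Matrix.mul_inv_rev, ← Matrix.mul_assoc, Matrix.mul_nonsing_inv _ hSdet,
      Matrix.one_mul]
  rw [hQi, ← Matrix.mulVec_mulVec, hdiag]
  generalize P⁻¹.mulVec y = z
  rw [hPQ, ← Matrix.mulVec_mulVec, hdiag]
  congr 1
  funext i
  simp only [hardShrink, abs_mul, abs_of_pos (hpos i), mul_lt_mul_iff_right₀ (hpos i), mul_ite,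
    mul_zero]
end

section
/- Let P be an invertible real n×n matrix with singular value decomposition P = U Σ Vᵀ, where U and V are orthonormal n×n matrices and Σ is a diagonal matrix with strictly positive diagonal entries. Then Q₀ = U Vᵀ is the unique minimizer, over all orthonormal n×n matrices Q, of the Frobenius distance ‖P − Q‖_F. (The nearest orthonormal matrix to P in Frobenius norm is UVᵀ.) -/
open Matrix

/-- The Frobenius norm of a real square matrix. -/
noncomputable def frobNorm {n : ℕ} (A : Matrix (Fin n) (Fin n) ℝ) : ℝ :=
  Real.sqrt (∑ i, ∑ j, (A i j) ^ 2)

lemma frob_sum_eq_trace {n : ℕ} (A : Matrix (Fin n) (Fin n) ℝ) :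
    ∑ i, ∑ j, (A i j) ^ 2 = (A * Aᵀ).trace := by
  simp [Matrix.trace, Matrix.mul_apply, pow_two]

lemma frobNorm_conj {n : ℕ} (U V A : Matrix (Fin n) (Fin n) ℝ)
    (hU : Uᵀ * U = 1) (hV : Vᵀ * V = 1) : frobNorm (U * A * Vᵀ) = frobNorm A := by
  unfold frobNorm
  rw [frob_sum_eq_trace, frob_sum_eq_trace]
  have h : (U * A * Vᵀ) * (U * A * Vᵀ)ᵀ = U * (A * Aᵀ * Uᵀ) := by
    simp only [Matrix.transpose_mul, Matrix.transpose_transpose]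
    calc _ = U * A * (Vᵀ * V) * Aᵀ * Uᵀ := by simp only [Matrix.mul_assoc]
      _ = _ := by rw [hV]; simp only [Matrix.mul_assoc, Matrix.mul_one]
  rw [h, Matrix.trace_mul_comm, Matrix.mul_assoc, hU, Matrix.mul_one]

lemma row_id {n : ℕ} (s : Fin n → ℝ) (W : Matrix (Fin n) (Fin n) ℝ) (hW : W * Wᵀ = 1)
    (i : Fin n) : ∑ j, ((diagonal s - W) i j) ^ 2 =
      (s i - 1) ^ 2 + s i * ∑ j, ((W - 1) i j) ^ 2 := by
  have h1 : ∑ j, W i j ^ 2 = 1 := by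
    have := congrFun (congrFun hW i) i
    simpa [Matrix.mul_apply, pow_two] using this
  have h2 : ∀ t : ℝ, ∑ j, (t * (1 : Matrix (Fin n) (Fin n) ℝ) i j - W i j) ^ 2
      = t ^ 2 - 2 * t * W i i + 1 := by
    intro t
    have : ∀ j, (t * (1 : Matrix (Fin n) (Fin n) ℝ) i j - W i j) ^ 2
      = (if i = j then t ^ 2 - 2 * t * W i j else 0) + W i j ^ 2 := by
      intro j
      by_cases h : i = j
      · subst h; simp; ring
      · simp [h]
    simp_rw [this, Finset.sum_add_distrib, h1]
    simp
  have h3 : ∑ j, ((diagonal s - W) i j) ^ 2 = s i ^ 2 - 2 * s i * W i i + 1 := by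
    rw [← h2]
    refine Finset.sum_congr rfl fun j _ => ?_
    by_cases h : i = j
    · subst h; simp
    · simp [h]
  have h4 : ∑ j, ((W - 1) i j) ^ 2 = 1 ^ 2 - 2 * 1 * W i i + 1 := by
    rw [← h2]
    refine Finset.sum_congr rfl fun j _ => ?_
    rw [Matrix.sub_apply]; ring
  rw [h3, h4]; ring

lemma total_id {n : ℕ} (s : Fin n → ℝ) (W : Matrix (Fin n) (Fin n) ℝ) (hW : W * Wᵀ = 1) :
    ∑ i, ∑ j, ((diagonal s - W) i j) ^ 2 =
      ∑ i, ∑ j, ((diagonal s - 1) i j) ^ 2 + ∑ i, s i * ∑ j, ((W - 1) i j) ^ 2 := by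
  rw [← Finset.sum_add_distrib]
  refine Finset.sum_congr rfl fun i _ => ?_
  rw [row_id s W hW, row_id s 1 (by simp)]
  simp

/-- Nearest orthonormal matrix: if `P = U Σ Vᵀ` is a singular value decomposition of the
invertible matrix `P` (`U, V` orthonormal, `Σ` diagonal with strictly positive entries),
then `Q₀ = U Vᵀ` is the unique minimizer of the Frobenius distance `‖P − Q‖_F` over all
orthonormal matrices `Q`. -/
theorem nearest_orthonormal_matrix (n : ℕ) (P U V : Matrix (Fin n) (Fin n) ℝ)
    (s : Fin n → ℝ) (hs : ∀ i, 0 < s i)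
    (hU : Uᵀ * U = 1 ∧ U * Uᵀ = 1) (hV : Vᵀ * V = 1 ∧ V * Vᵀ = 1)
    (hP : IsUnit P.det) (hSVD : P = U * Matrix.diagonal s * Vᵀ) :
    ((U * Vᵀ)ᵀ * (U * Vᵀ) = 1 ∧ (U * Vᵀ) * (U * Vᵀ)ᵀ = 1) ∧
    (∀ Q : Matrix (Fin n) (Fin n) ℝ, Qᵀ * Q = 1 → Q * Qᵀ = 1 →
      frobNorm (P - U * Vᵀ) ≤ frobNorm (P - Q)) ∧
    (∀ Q : Matrix (Fin n) (Fin n) ℝ, Qᵀ * Q = 1 → Q * Qᵀ = 1 →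
      frobNorm (P - Q) = frobNorm (P - U * Vᵀ) → Q = U * Vᵀ) := by
  have e0 : P - U * Vᵀ = U * (diagonal s - 1) * Vᵀ := by
    rw [hSVD, Matrix.mul_sub, Matrix.sub_mul, Matrix.mul_one]
  have eQ : ∀ Q, U * (Uᵀ * Q * V) * Vᵀ = Q := by
    intro Q
    calc _ = (U * Uᵀ) * Q * (V * Vᵀ) := by simp only [Matrix.mul_assoc]
      _ = Q := by rw [hU.2, hV.2]; simp
  have e1 : ∀ Q, P - Q = U * (diagonal s - Uᵀ * Q * V) * Vᵀ := by
    intro Q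
    rw [Matrix.mul_sub, Matrix.sub_mul, eQ, hSVD]
  have hW : ∀ Q : Matrix (Fin n) (Fin n) ℝ, Q * Qᵀ = 1 →
      (Uᵀ * Q * V) * (Uᵀ * Q * V)ᵀ = 1 := by
    intro Q hQ
    simp only [Matrix.transpose_mul, Matrix.transpose_transpose]
    calc _ = Uᵀ * (Q * (V * Vᵀ) * Qᵀ) * U := by simp only [Matrix.mul_assoc]
      _ = 1 := by rw [hV.2, Matrix.mul_one, hQ, Matrix.mul_one, hU.1]
  have hnn : ∀ (W : Matrix (Fin n) (Fin n) ℝ) (i : Fin n),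
      0 ≤ s i * ∑ j, ((W - 1) i j) ^ 2 := fun W i =>
    mul_nonneg (hs i).le (Finset.sum_nonneg fun j _ => sq_nonneg _)
  have horth : (U * Vᵀ) * (U * Vᵀ)ᵀ = 1 := by
    simp only [Matrix.transpose_mul, Matrix.transpose_transpose]
    calc _ = U * (Vᵀ * V) * Uᵀ := by simp only [Matrix.mul_assoc]
      _ = 1 := by rw [hV.1, Matrix.mul_one, hU.2]
  refine ⟨⟨mul_eq_one_comm.mp horth, horth⟩, ?_, ?_⟩
  · intro Q _ hQ
    rw [e0, e1 Q, frobNorm_conj _ _ _ hU.1 hV.1, frobNorm_conj _ _ _ hU.1 hV.1]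
    unfold frobNorm
    apply Real.sqrt_le_sqrt
    rw [total_id s _ (hW Q hQ)]
    exact le_add_of_nonneg_right (Finset.sum_nonneg fun i _ => hnn _ i)
  · intro Q _ hQ h
    rw [e0, e1 Q, frobNorm_conj _ _ _ hU.1 hV.1, frobNorm_conj _ _ _ hU.1 hV.1] at h
    unfold frobNorm at h
    have hS : ∀ A : Matrix (Fin n) (Fin n) ℝ, 0 ≤ ∑ i, ∑ j, (A i j) ^ 2 := fun A =>
      Finset.sum_nonneg fun i _ => Finset.sum_nonneg fun j _ => sq_nonneg _
    have h' := (Real.sqrt_inj (hS _) (hS _)).mp h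
    rw [total_id s _ (hW Q hQ), add_eq_left] at h'
    have h := (Finset.sum_eq_zero_iff_of_nonneg (fun i _ => hnn _ i)).mp h'
    have hW1 : Uᵀ * Q * V = 1 := by
      ext i j
      have h1 := (mul_eq_zero.mp (h i (Finset.mem_univ i))).resolve_left (hs i).ne'
      rw [Finset.sum_eq_zero_iff_of_nonneg (fun j _ => sq_nonneg _)] at h1
      have h2 := pow_eq_zero_iff (two_ne_zero) |>.mp (h1 j (Finset.mem_univ j))
      rw [Matrix.sub_apply] at h2
      exact sub_eq_zero.mp h2
    rw [← eQ Q, hW1, Matrix.mul_one]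
end
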